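/- Let N ≥ 1, k ≥ 1, let t₀ < t₁ be real numbers, let ω₀ ⊂ ℝ^N be a nonempty open set, and let g : ℝ × ℝ^N → ℝ^N be a C^k map such that g(t, x) ≠ 0 for every (t, x) ∈ (t₀, t₁) × ω₀. Then there exist a nonempty open set U ⊂ ℝ^{N−1}, a real number ε > 0, and a map Λ : (t₀, t₁) × (0, ε) × U → ℝ × ℝ^N such that: (i) Λ is a C^k diffeomorphism onto an open subset of (t₀, t₁) × ω₀; (ii) the time component of Λ(t, s, z) equals t for every (t, s, z); and (iii) for every C¹ function y : ℝ × ℝ^N → ℝ and every (t, s, z) ∈ (t₀, t₁) × (0, ε) × U, ∂_s (y ∘ Λ)(t, s, z) = g(Λ(t, s, z)) · ∇_x y(Λ(t, s, z)), where ∇_x denotes the gradient in the space variables. -/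

import Mathlib

open Real

section Nem
variable {X : Type} [TopologicalSpace X] [CompactSpace X]

/-- pointwise application of operators -/
noncomputable def nemApp (E G : Type) [NormedAddCommGroup E] [NormedSpace ℝ E]
    [NormedAddCommGroup G] [NormedSpace ℝ G] :
    C(X, E →L[ℝ] G) →L[ℝ] (C(X, E) →L[ℝ] C(X, G)) :=
  LinearMap.mkContinuous₂
    (LinearMap.mk₂ ℝ (fun (A : C(X, E →L[ℝ] G)) (h : C(X, E)) =>
        (⟨fun x => A x (h x), by fun_prop⟩ : C(X, G)))
      (by intros; ext; simp) (by intros; ext; simp) (by intros; ext; simp) (by intros; ext; simp))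
    1 (by
      intro A h
      rw [ContinuousMap.norm_le _ (by positivity)]
      intro x
      simp only [LinearMap.mk₂_apply, ContinuousMap.coe_mk, one_mul]
      exact ((A x).le_opNorm _).trans
        (mul_le_mul (A.norm_coe_le_norm x) (h.norm_coe_le_norm x) (norm_nonneg _)
          ((norm_nonneg (A x)).trans (A.norm_coe_le_norm x))))

theorem nemApp_apply {E G : Type} [NormedAddCommGroup E] [NormedSpace ℝ E]
    [NormedAddCommGroup G] [NormedSpace ℝ G] (A : C(X, E →L[ℝ] G)) (h : C(X, E)) (x : X) :
    nemApp E G A h x = A x (h x) := rfl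

theorem nem_unif {E H : Type} [NormedAddCommGroup E] [NormedAddCommGroup H]
    (F' : C(E, H)) (u : C(X, E)) (c : ℝ) (hc : 0 < c) :
    ∃ δ > 0, ∀ x, ∀ y ∈ Metric.ball (u x) δ, ‖F' y - F' (u x)‖ ≤ c := by
  have hcont : Continuous (fun v : C(X, E) => F'.comp v) :=
    ContinuousMap.continuous_postcomp (X := X) F'
  obtain ⟨δ, hδ, H⟩ := Metric.continuous_iff.1 hcont u c hc
  refine ⟨δ, hδ, fun x => ?_⟩
  intro y hy
  have h1 : dist (u + ContinuousMap.const X (y - u x)) u < δ := by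
    rw [dist_eq_norm, add_sub_cancel_left]
    refine lt_of_le_of_lt ((ContinuousMap.norm_le _ (norm_nonneg (y - u x))).2 ?_)
      (by simpa [dist_eq_norm] using hy)
    intro z; simp
  have h2 := H _ h1
  rw [dist_eq_norm] at h2
  have h3 := (ContinuousMap.norm_coe_le_norm
    (F'.comp (u + ContinuousMap.const X (y - u x)) - F'.comp u) x).trans h2.le
  simpa using h3

theorem nem_hasFDerivAt {E G : Type} [NormedAddCommGroup E] [NormedSpace ℝ E]
    [NormedAddCommGroup G] [NormedSpace ℝ G] (F : C(E, G)) (F' : C(E, E →L[ℝ] G))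
    (hF : ∀ x, HasFDerivAt F (F' x) x) (u : C(X, E)) :
    HasFDerivAt (fun u : C(X, E) => F.comp u) (nemApp E G (F'.comp u)) u := by
  rw [hasFDerivAt_iff_isLittleO_nhds_zero, Asymptotics.isLittleO_iff]
  intro c hc
  obtain ⟨δ, hδ, H⟩ := nem_unif F' u c hc
  filter_upwards [Metric.ball_mem_nhds (0 : C(X, E)) hδ] with h hh
  rw [ContinuousMap.norm_le _ (by positivity)]
  intro x
  have key : ∀ y ∈ Metric.ball (u x) δ, ‖F' y - F' (u x)‖ ≤ c := fun y hy => H x y hy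
  have hx : u x + h x ∈ Metric.ball (u x) δ := by
    have := (h.norm_coe_le_norm x).trans_lt (by simpa using hh)
    simpa [dist_eq_norm] using this
  have := (convex_ball (u x) δ).norm_image_sub_le_of_norm_hasFDerivWithin_le'
    (f := F) (f' := fun y => F' y) (φ := F' (u x)) (C := c)
    (fun y _ => (hF y).hasFDerivWithinAt) key (Metric.mem_ball_self hδ) hx
  simp only [add_sub_cancel_left] at this
  refine le_trans ?_ (this.trans (mul_le_mul_of_nonneg_left (h.norm_coe_le_norm x) hc.le))
  apply le_of_eq
  simp [nemApp_apply]

theorem nem_contDiff (n : ℕ) : ∀ {E G : Type} [NormedAddCommGroup E] [NormedSpace ℝ E]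
    [NormedAddCommGroup G] [NormedSpace ℝ G] (F : C(E, G)), ContDiff ℝ n F →
    ContDiff ℝ n (fun u : C(X, E) => F.comp u) := by
  induction n with
  | zero =>
    intro E G _ _ _ _ F hF
    exact contDiff_zero.2 (ContinuousMap.continuous_postcomp (X := X) F)
  | succ n ih =>
    intro E G _ _ _ _ F hF
    obtain ⟨F', hF', hd⟩ := contDiff_succ_iff_hasFDerivAt.1 hF
    refine contDiff_succ_iff_hasFDerivAt.2
      ⟨fun u => nemApp E G ((⟨F', hF'.continuous⟩ : C(E, E →L[ℝ] G)).comp u), ?_, ?_⟩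
    · exact (nemApp E G).contDiff.comp (ih ⟨F', hF'.continuous⟩ hF')
    · intro u
      exact nem_hasFDerivAt F ⟨F', hF'.continuous⟩ hd u

end Nem

section Flow
open Set

/-- the compact time interval `[-1,1]` -/
abbrev II : Type := Set.Icc (-1 : ℝ) 1

/-- extension of a curve to the line -/
noncomputable def extI {E : Type} (u : II → E) : ℝ → E :=
  Set.IccExtend (by norm_num : (-1 : ℝ) ≤ 1) u

theorem extI_cont {E : Type} [TopologicalSpace E] (u : C(II, E)) : Continuous (extI u) :=
  u.continuous.Icc_extend'

theorem extI_of_mem {E : Type} (u : II → E) {x : ℝ} (hx : x ∈ Set.Icc (-1 : ℝ) 1) :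
    extI u x = u ⟨x, hx⟩ := Set.IccExtend_of_mem _ _ hx

theorem extI_norm_le {E : Type} [NormedAddCommGroup E] (u : C(II, E)) (x : ℝ) :
    ‖extI u x‖ ≤ ‖u‖ := u.norm_coe_le_norm _

/-- integration from zero -/
noncomputable def intOp (E : Type) [NormedAddCommGroup E] [NormedSpace ℝ E] [CompleteSpace E] :
    C(II, E) →L[ℝ] C(II, E) :=
  LinearMap.mkContinuous
    { toFun := fun u => ⟨fun τ => ∫ σ in (0 : ℝ)..(τ : ℝ), extI u σ,
        (intervalIntegral.continuous_primitive
          (fun a b => (extI_cont u).intervalIntegrable a b) 0).comp continuous_subtype_val⟩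
      map_add' := by
        intro u v
        ext τ
        simp only [ContinuousMap.coe_mk, ContinuousMap.add_apply]
        rw [← intervalIntegral.integral_add ((extI_cont u).intervalIntegrable _ _)
          ((extI_cont v).intervalIntegrable _ _)]
        rfl
      map_smul' := by
        intro c u
        ext τ
        simp only [ContinuousMap.coe_mk, ContinuousMap.smul_apply, RingHom.id_apply]
        rw [← intervalIntegral.integral_smul]
        rfl }
    1 (by
      intro u
      rw [ContinuousMap.norm_le _ (by positivity)]
      rintro ⟨τ, h1, h2⟩
      simp only [LinearMap.coe_mk, AddHom.coe_mk, ContinuousMap.coe_mk, one_mul]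
      have := intervalIntegral.norm_integral_le_of_norm_le_const
        (f := extI u) (a := 0) (b := τ) (C := ‖u‖) (fun x _ => extI_norm_le u x)
      have h3 : |τ - 0| ≤ 1 := by rw [sub_zero, abs_le]; exact ⟨h1, h2⟩
      nlinarith [norm_nonneg u])

theorem intOp_apply {E : Type} [NormedAddCommGroup E] [NormedSpace ℝ E] [CompleteSpace E]
    (u : C(II, E)) (τ : II) : intOp E u τ = ∫ σ in (0 : ℝ)..(τ : ℝ), extI u σ := rfl

theorem intOp_norm_le {E : Type} [NormedAddCommGroup E] [NormedSpace ℝ E] [CompleteSpace E]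
    (u : C(II, E)) : ‖intOp E u‖ ≤ ‖u‖ := by
  have h : ‖intOp E‖ ≤ 1 := LinearMap.mkContinuous_norm_le _ zero_le_one _
  exact ((intOp E).le_opNorm u).trans (by nlinarith [norm_nonneg u])

variable {E : Type} [NormedAddCommGroup E] [NormedSpace ℝ E] [CompleteSpace E]

theorem comp_sub_norm_le (F : C(E, E)) (K : NNReal) (hL : LipschitzWith K F) (u v : C(II, E)) :
    ‖F.comp u - F.comp v‖ ≤ K * ‖u - v‖ := by
  rw [ContinuousMap.norm_le _ (by positivity)]
  intro x
  have := hL.dist_le_mul (u x) (v x)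
  rw [dist_eq_norm, dist_eq_norm] at this
  refine this.trans (mul_le_mul_of_nonneg_left ?_ K.2)
  exact (u - v).norm_coe_le_norm x

theorem fix_unique (F : C(E, E)) (K : NNReal) (hL : LipschitzWith K F) (s : ℝ) (hs : |s| * K < 1)
    (p : E) (u v : C(II, E))
    (hu : u = ContinuousMap.const II p + s • intOp E (F.comp u))
    (hv : v = ContinuousMap.const II p + s • intOp E (F.comp v)) : u = v := by
  have h1 : u - v = s • intOp E (F.comp u - F.comp v) := by
    rw [map_sub, smul_sub]
    calc u - v = (ContinuousMap.const II p + s • intOp E (F.comp u)) -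
        (ContinuousMap.const II p + s • intOp E (F.comp v)) := by rw [← hu, ← hv]
      _ = _ := by abel
  have h2 : ‖u - v‖ ≤ |s| * (K * ‖u - v‖) := by
    calc ‖u - v‖ = |s| * ‖intOp E (F.comp u - F.comp v)‖ := by
          conv_lhs => rw [h1]
          rw [norm_smul, Real.norm_eq_abs]
      _ ≤ |s| * (K * ‖u - v‖) := by
          gcongr
          exact (intOp_norm_le _).trans (comp_sub_norm_le F K hL u v)
  have h3 : ‖u - v‖ = 0 := by
    have := norm_nonneg (u - v)
    nlinarith
  exact sub_eq_zero.1 (norm_eq_zero.1 h3)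

theorem fix_exists (F : C(E, E)) (K : NNReal) (hL : LipschitzWith K F) (s : ℝ) (hs : |s| * K < 1)
    (p : E) : ∃ u : C(II, E), u = ContinuousMap.const II p + s • intOp E (F.comp u) := by
  have hc : ContractingWith (‖s‖₊ * K)
      (fun u : C(II, E) => ContinuousMap.const II p + s • intOp E (F.comp u)) := by
    refine ⟨?_, ?_⟩
    · rw [← NNReal.coe_lt_coe]; simpa using hs
    · refine LipschitzWith.of_dist_le_mul fun u v => ?_
      rw [dist_eq_norm, dist_eq_norm, add_sub_add_left_eq_sub, ← smul_sub, ← map_sub, norm_smul,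
        NNReal.coe_mul, coe_nnnorm, mul_assoc]
      refine mul_le_mul_of_nonneg_left ?_ (norm_nonneg _)
      exact (intOp_norm_le _).trans (comp_sub_norm_le F K hL u v)
  exact ⟨hc.fixedPoint, hc.fixedPoint_isFixedPt.symm⟩

theorem fix_contDiffAt (n : ℕ) (hn : n ≠ 0) (F : C(E, E)) (hF : ContDiff ℝ n F) (K : NNReal)
    (hL : LipschitzWith K F) (T : ℝ) (hTK : T * K < 1)
    (u : ℝ × E → C(II, E))
    (hu : ∀ q : ℝ × E, |q.1| < T →
      u q = ContinuousMap.const II q.2 + q.1 • intOp E (F.comp (u q)))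
    (q : ℝ × E) (hq : |q.1| < T) : ContDiffAt ℝ n u q := by
  have hK : ∀ s : ℝ, |s| < T → |s| * K < 1 := fun s hs =>
    lt_of_le_of_lt (mul_le_mul_of_nonneg_right hs.le K.2) hTK
  let cst : E →L[ℝ] C(II, E) := ContinuousLinearMap.const ℝ II
  let Ψ : (ℝ × E) × C(II, E) → C(II, E) := fun w =>
    w.2 - cst w.1.2 - w.1.1 • intOp E (F.comp w.2)
  have hnem := nem_contDiff (X := II) n F hF
  have hΨ : ContDiff ℝ n Ψ := by
    have h1 : ContDiff ℝ n (fun w : (ℝ × E) × C(II, E) => intOp E (F.comp w.2)) :=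
      (intOp E).contDiff.comp (hnem.comp contDiff_snd)
    have h2 : ContDiff ℝ n (fun w : (ℝ × E) × C(II, E) => cst w.1.2) :=
      cst.contDiff.comp (contDiff_snd.comp contDiff_fst)
    exact (contDiff_snd.sub h2).sub ((contDiff_fst.comp contDiff_fst).smul h1)
  have hn' : (n : WithTop ℕ∞) ≠ 0 := by exact_mod_cast hn
  have hd : Differentiable ℝ Ψ := hΨ.differentiable hn'
  set B : C(II, E) →L[ℝ] C(II, E) :=
    fderiv ℝ (fun u : C(II, E) => q.1 • intOp E (F.comp u)) (u q) with hB
  have hBn : ‖B‖ < 1 := by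
    refine lt_of_le_of_lt ?_ (hK _ hq)
    refine norm_fderiv_le_of_lip' ℝ (by positivity) (Filter.Eventually.of_forall fun v => ?_)
    rw [← smul_sub, ← map_sub, norm_smul, mul_assoc, Real.norm_eq_abs]
    gcongr
    exact (intOp_norm_le _).trans (comp_sub_norm_le F K hL _ _)
  have hinv : (fderiv ℝ Ψ (q, u q) ∘L .inr ℝ (ℝ × E) C(II, E)).IsInvertible := by
    have e1 : fderiv ℝ Ψ (q, u q) ∘L .inr ℝ (ℝ × E) C(II, E) = 1 - B := by
      have h1 : HasFDerivAt (fun v : C(II, E) => Ψ (q, v))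
          (fderiv ℝ Ψ (q, u q) ∘L .inr ℝ (ℝ × E) C(II, E)) (u q) :=
        (hd (q, u q)).hasFDerivAt.comp (u q) (hasFDerivAt_prodMk_right q (u q))
      have h2 : HasFDerivAt (fun v : C(II, E) => Ψ (q, v)) (1 - B) (u q) := by
        have h3 : DifferentiableAt ℝ (fun u : C(II, E) => q.1 • intOp E (F.comp u)) (u q) :=
          (((intOp E).contDiff.comp hnem).differentiable hn').const_smul q.1 (u q)
        exact ((hasFDerivAt_id (u q)).sub_const (cst q.2)).sub h3.hasFDerivAt
      exact h1.unique h2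
    rw [e1]
    exact ⟨ContinuousLinearEquiv.unitsEquiv ℝ _ (Units.oneSub B hBn), rfl⟩
  have hcd : ContDiffAt ℝ n Ψ (q, u q) := hΨ.contDiffAt
  have hsm := hcd.contDiffAt_implicitFunction hn' hinv
  refine hsm.congr_of_eventuallyEq ?_
  have hΨ0 : Ψ (q, u q) = 0 := by
    have := hu q hq
    simp only [Ψ]
    rw [sub_sub, sub_eq_zero]
    exact this
  have hopen : ∀ᶠ x : ℝ × E in nhds q, |x.1| < T :=
    (isOpen_lt (by fun_prop) continuous_const).mem_nhds hq
  filter_upwards [hcd.eventually_apply_implicitFunction hn' hinv, hopen] with x hx hxT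
  refine fix_unique F K hL x.1 (hK _ hxT) x.2 _ _ (hu x hxT) ?_
  rw [hΨ0] at hx
  simp only [Ψ] at hx
  rw [sub_sub, sub_eq_zero] at hx
  exact hx

theorem flow_exists (n : ℕ) (hn : n ≠ 0) (F : C(E, E)) (hF : ContDiff ℝ n F) (K : NNReal)
    (hL : LipschitzWith K F) (T : ℝ) (hT : 0 < T) (hTK : T * K < 1) :
    ∃ φ : ℝ × E → E, (∀ q : ℝ × E, |q.1| < T → ContDiffAt ℝ n φ q) ∧ (∀ p, φ (0, p) = p) ∧
      (∀ p s, |s| < T → HasDerivAt (fun s => φ (s, p)) (F (φ (s, p))) s) ∧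
      (∀ p s, |s| < T → (1 - T * K) * ‖φ (s, p) - p‖ ≤ T * ‖F p‖) := by
  have hK : ∀ s : ℝ, |s| < T → |s| * K < 1 := fun s hs =>
    lt_of_le_of_lt (mul_le_mul_of_nonneg_right hs.le K.2) hTK
  have hex : ∀ q : ℝ × E, ∃ u : C(II, E), |q.1| < T →
      u = ContinuousMap.const II q.2 + q.1 • intOp E (F.comp u) := by
    intro q
    by_cases hq : |q.1| < T
    · obtain ⟨u, hu⟩ := fix_exists F K hL q.1 (hK _ hq) q.2
      exact ⟨u, fun _ => hu⟩
    · exact ⟨0, fun h => absurd h hq⟩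
  choose u hu using hex
  have hone : (1 : ℝ) ∈ Set.Icc (-1 : ℝ) 1 := by norm_num
  have huval : ∀ q : ℝ × E, |q.1| < T → ∀ τ (hτ : τ ∈ Set.Icc (-1 : ℝ) 1),
      u q ⟨τ, hτ⟩ = q.2 + q.1 • ∫ σ in (0 : ℝ)..τ, extI (F.comp (u q)) σ := by
    intro q hq τ hτ
    have := congrArg (fun w : C(II, E) => w ⟨τ, hτ⟩) (hu q hq)
    simpa [intOp_apply] using this
  -- scaling
  have hscale : ∀ p s l (hs : |s| < T) (hl : l ∈ Set.Icc (-1 : ℝ) 1),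
      u (l * s, p) ⟨1, hone⟩ = u (s, p) ⟨l, hl⟩ := by
    intro p s l hs hl
    have hl' : |l| ≤ 1 := abs_le.2 hl
    have hmul : ∀ τ : II, l * (τ : ℝ) ∈ Set.Icc (-1 : ℝ) 1 := by
      intro τ
      refine abs_le.1 ?_
      rw [abs_mul]
      have : |(τ : ℝ)| ≤ 1 := abs_le.2 τ.2
      exact mul_le_one₀ hl' (abs_nonneg _) this
    have hls : |l * s| < T := by
      rw [abs_mul]
      exact lt_of_le_of_lt (mul_le_of_le_one_left (abs_nonneg _) hl') hs
    let v : C(II, E) := ⟨fun τ => u (s, p) ⟨l * τ, hmul τ⟩, by fun_prop⟩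
    have hv : v = ContinuousMap.const II p + (l * s) • intOp E (F.comp v) := by
      ext τ
      have h1 := huval (s, p) hs (l * τ) (hmul τ)
      simp only [v, ContinuousMap.coe_mk, ContinuousMap.add_apply, ContinuousMap.const_apply,
        ContinuousMap.smul_apply, intOp_apply]
      rw [h1]
      congr 1
      rw [mul_comm l s, mul_smul]
      congr 1
      have h2 := intervalIntegral.smul_integral_comp_mul_left (a := 0) (b := (τ : ℝ))
        (f := extI (F.comp (u (s, p)))) l
      rw [mul_zero] at h2
      change _ = l • _
      rw [← h2]
      congr 1
      refine intervalIntegral.integral_congr fun x hx => ?_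
      have hx1 : x ∈ Set.Icc (-1 : ℝ) 1 := by
        have h0 : (0 : ℝ) ∈ Set.Icc (-1 : ℝ) 1 := by norm_num
        exact (Set.uIcc_subset_Icc h0 τ.2) hx
      change extI _ _ = extI _ _
      rw [extI_of_mem _ hx1, extI_of_mem _ (hmul ⟨x, hx1⟩)]
      rfl
    have := fix_unique F K hL (l * s) (hK _ hls) p _ _ (hu (l * s, p) hls) hv
    rw [this]
    simp [v]
  refine ⟨fun q => u q ⟨1, hone⟩, ?_, ?_, ?_, ?_⟩
  · intro q hq
    have h1 := fix_contDiffAt n hn F hF K hL T hTK u hu q hq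
    exact (ContinuousMap.evalCLM ℝ (⟨1, hone⟩ : II)).contDiff.contDiffAt.comp q h1
  · intro p
    have := huval (0, p) (by simpa using hT) 1 hone
    simpa using this
  · intro p s hs
    obtain ⟨s1, hs1, hs1T⟩ := exists_between hs
    have hs1pos : 0 < s1 := lt_of_le_of_lt (abs_nonneg s) hs1
    have hs1a : |s1| < T := by rwa [abs_of_pos hs1pos]
    have hmem : ∀ r, |r| < s1 → r / s1 ∈ Set.Icc (-1 : ℝ) 1 := by
      intro r hr
      refine abs_le.1 ?_
      rw [abs_div, abs_of_pos hs1pos]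
      exact (div_le_one hs1pos).2 hr.le
    have heq : ∀ r, |r| < s1 → u (r, p) ⟨1, hone⟩ = extI (u (s1, p)) (r / s1) := by
      intro r hr
      have := hscale p s1 (r / s1) hs1a (hmem r hr)
      rw [div_mul_cancel₀ _ hs1pos.ne'] at this
      rw [this, extI_of_mem]
    have hev : (fun r => u (r, p) ⟨1, hone⟩) =ᶠ[nhds s]
        fun r => p + s1 • ∫ σ in (0 : ℝ)..(r / s1), extI (F.comp (u (s1, p))) σ := by
      have : ∀ᶠ r in nhds s, |r| < s1 :=
        (isOpen_lt (by fun_prop) continuous_const).mem_nhds hs1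
      filter_upwards [this] with r hr
      rw [heq r hr, extI_of_mem _ (hmem r hr), huval (s1, p) hs1a]
    refine HasDerivAt.congr_of_eventuallyEq ?_ hev
    have hc := extI_cont (F.comp (u (s1, p)))
    have h1 := intervalIntegral.integral_hasDerivAt_right (a := 0) (b := s / s1)
      (hc.intervalIntegrable _ _) (hc.stronglyMeasurableAtFilter _ _) hc.continuousAt
    have h2 := h1.scomp s ((hasDerivAt_id s).div_const s1)
    have h3 := (h2.const_smul s1).const_add p
    have h4 : s1 • (1 / s1) • extI (F.comp (u (s1, p))) (s / s1) = F (u (s, p) ⟨1, hone⟩) := ?_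
    · rw [h4] at h3
      exact h3
    rw [smul_smul, mul_one_div_cancel hs1pos.ne', one_smul, heq s hs1,
      extI_of_mem _ (hmem s hs1), extI_of_mem _ (hmem s hs1)]
    rfl
  · intro p s hs
    have h1 := hu (s, p) hs
    have h2 : ‖u (s, p) - ContinuousMap.const II p‖ ≤
        T * (‖F p‖ + K * ‖u (s, p) - ContinuousMap.const II p‖) := by
      have e : u (s, p) - ContinuousMap.const II p = s • intOp E (F.comp (u (s, p))) := by
        rw [sub_eq_iff_eq_add']; exact h1
      calc _ = |s| * ‖intOp E (F.comp (u (s, p)))‖ := by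
            conv_lhs => rw [e]
            rw [norm_smul, Real.norm_eq_abs]
        _ ≤ T * ‖F.comp (u (s, p))‖ := by
            gcongr
            exact intOp_norm_le _
        _ ≤ _ := by
            gcongr
            have h4 := comp_sub_norm_le F K hL (u (s, p)) (ContinuousMap.const II p)
            have h5 : ‖F.comp (ContinuousMap.const II p)‖ ≤ ‖F p‖ :=
              (ContinuousMap.norm_le _ (norm_nonneg _)).2 fun x => le_rfl
            have h6 := norm_sub_norm_le (F.comp (u (s, p))) (F.comp (ContinuousMap.const II p))
            linarith
    have h3 := (u (s, p) - ContinuousMap.const II p).norm_coe_le_norm ⟨1, hone⟩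
    simp only [ContinuousMap.sub_apply, ContinuousMap.const_apply] at h3
    have h7 : 0 < 1 - T * K := by linarith
    calc _ ≤ (1 - T * K) * ‖u (s, p) - ContinuousMap.const II p‖ := by gcongr
      _ ≤ _ := by linarith

end Flow

section Flow2
variable {E : Type} [NormedAddCommGroup E] [NormedSpace ℝ E]

theorem flow_group (F : E → E) (K : NNReal) (hL : LipschitzWith K F) (T : ℝ) (φ : ℝ × E → E)
    (h0 : ∀ p, φ (0, p) = p)
    (hd : ∀ p s, |s| < T → HasDerivAt (fun s => φ (s, p)) (F (φ (s, p))) s)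
    (p : E) (a b : ℝ) (hab : |a| + |b| < T) : φ (a, φ (b, p)) = φ (a + b, p) := by
  have hb : 0 < T - |b| := by linarith [abs_nonneg a]
  have hIoo : ∀ r, r ∈ Set.Ioo (-(T - |b|)) (T - |b|) ↔ |r| < T - |b| := fun r => abs_lt.symm
  have := ODE_solution_unique_of_mem_Ioo (v := fun _ => F) (s := fun _ => Set.univ) (K := K)
    (f := fun r => φ (r, φ (b, p))) (g := fun r => φ (r + b, p))
    (a := -(T - |b|)) (b := T - |b|) (t₀ := 0)
    (fun _ _ => hL.lipschitzOnWith) ((hIoo 0).2 (by simpa using hb))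
    (fun r hr => ⟨hd _ r (by have := (hIoo r).1 hr; linarith [abs_nonneg b]), trivial⟩)
    (fun r hr => ⟨by
      have h1 := (hIoo r).1 hr
      have h2 : |r + b| < T := by linarith [abs_add_le r b]
      exact (hd p (r + b) h2).comp_add_const r b, trivial⟩)
    (by simp [h0])
  exact this ((hIoo a).2 (by linarith))

theorem flow_immersion {Z : Type} [NormedAddCommGroup Z] [NormedSpace ℝ Z]
    (F : E → E) (K : NNReal) (hL : LipschitzWith K F) (T : ℝ) (hT : 0 < T) (φ : ℝ × E → E)
    (hφ : ∀ q : ℝ × E, |q.1| < T → DifferentiableAt ℝ φ q)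
    (h0 : ∀ p, φ (0, p) = p)
    (hd : ∀ p s, |s| < T → HasDerivAt (fun s => φ (s, p)) (F (φ (s, p))) s)
    (σ : ℝ × Z → E) (σ' : ℝ × Z →L[ℝ] E) (q : ℝ × ℝ × Z) (hq : |q.2.1| < T / 2)
    (hσ : HasFDerivAt σ σ' (q.1, q.2.2)) (L : ℝ × ℝ × Z →L[ℝ] E)
    (hL' : HasFDerivAt (fun w : ℝ × ℝ × Z => φ (w.2.1, σ (w.1, w.2.2))) L q)
    (h : ℝ × ℝ × Z) (hh : L h = 0) :
    h.2.1 • F (σ (q.1, q.2.2)) + σ' (h.1, h.2.2) = 0 := by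
  obtain ⟨t, s, z⟩ := q
  simp only at *
  have hproj : HasFDerivAt (fun w : ℝ × ℝ × Z => (w.1, w.2.2))
      ((ContinuousLinearMap.fst ℝ ℝ (ℝ × Z)).prod
        ((ContinuousLinearMap.snd ℝ ℝ Z).comp (ContinuousLinearMap.snd ℝ ℝ (ℝ × Z)))) (t, s, z) :=
    ContinuousLinearMap.hasFDerivAt
      ((ContinuousLinearMap.fst ℝ ℝ (ℝ × Z)).prod
        ((ContinuousLinearMap.snd ℝ ℝ Z).comp (ContinuousLinearMap.snd ℝ ℝ (ℝ × Z))))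
  have hs1 : HasFDerivAt (fun w : ℝ × ℝ × Z => w.2.1 - s)
      ((ContinuousLinearMap.fst ℝ ℝ Z).comp (ContinuousLinearMap.snd ℝ ℝ (ℝ × Z))) (t, s, z) :=
    (ContinuousLinearMap.hasFDerivAt
      ((ContinuousLinearMap.fst ℝ ℝ Z).comp (ContinuousLinearMap.snd ℝ ℝ (ℝ × Z)))).sub_const s
  have hσ2 := HasFDerivAt.comp (f := fun w : ℝ × ℝ × Z => (w.1, w.2.2)) (t, s, z) hσ hproj
  have hin := hs1.prodMk hσ2
  have hφ0 := (hφ (0, σ (t, z)) (by simpa using hT)).hasFDerivAt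
  set D := fderiv ℝ φ (0, σ (t, z)) with hD
  have hφ0' : HasFDerivAt φ D (s - s, σ (t, z)) := by rw [sub_self]; exact hφ0
  have h1 := HasFDerivAt.comp
    (f := fun w : ℝ × ℝ × Z => (w.2.1 - s, σ (w.1, w.2.2))) (t, s, z) hφ0' hin
  -- other expression
  have hφs := (hφ (-s, φ (s, σ (t, z))) (by simp only [abs_neg]; linarith)).hasFDerivAt
  have hin2 := (hasFDerivAt_const (-s) ((t, s, z) : ℝ × ℝ × Z)).prodMk hL'
  have h2 := HasFDerivAt.comp
    (f := fun w : ℝ × ℝ × Z => (-s, φ (w.2.1, σ (w.1, w.2.2)))) (t, s, z) hφs hin2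
  have hev : (φ ∘ fun w : ℝ × ℝ × Z => (-s, φ (w.2.1, σ (w.1, w.2.2)))) =ᶠ[nhds (t, s, z)]
      (φ ∘ fun w : ℝ × ℝ × Z => (w.2.1 - s, σ (w.1, w.2.2))) := by
    have hop : ∀ᶠ w : ℝ × ℝ × Z in nhds (t, s, z), |w.2.1| < T / 2 :=
      (isOpen_lt (by fun_prop) continuous_const).mem_nhds hq
    filter_upwards [hop] with w hw
    simp only [Function.comp]
    rw [flow_group F K hL T φ h0 hd _ _ _ (by rw [abs_neg]; linarith)]
    congr 2
    ring
  have h3 := (h1.congr_of_eventuallyEq hev).unique h2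
  have h4 := congrArg (fun A : (ℝ × ℝ × Z) →L[ℝ] E => A h) h3
  simp [hh] at h4
  have h5 : D (1, 0) = F (σ (t, z)) := by
    have e1 := HasFDerivAt.comp_hasDerivAt (f := fun r : ℝ => (r, σ (t, z))) (0 : ℝ) hφ0
      ((hasDerivAt_id (0 : ℝ)).prodMk (hasDerivAt_const (0 : ℝ) (σ (t, z))))
    have e2 := hd (σ (t, z)) 0 (by simpa using hT)
    rw [h0] at e2
    exact e1.unique e2
  have h6 : ∀ w, D (0, w) = w := by
    intro w
    have e1 := HasFDerivAt.comp (f := fun y : E => ((0 : ℝ), y)) (σ (t, z)) hφ0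
      (hasFDerivAt_prodMk_right (0 : ℝ) (σ (t, z)))
    have e2 : HasFDerivAt (φ ∘ fun y : E => ((0 : ℝ), y)) (ContinuousLinearMap.id ℝ E) (σ (t, z)) := by
      have : (φ ∘ fun y : E => ((0 : ℝ), y)) = id := by ext y; simp [h0]
      rw [this]; exact hasFDerivAt_id _
    have := congrArg (fun A : E →L[ℝ] E => A w) (e1.unique e2)
    simpa using this
  have h7 : ∀ a w, D (a, w) = a • F (σ (t, z)) + w := by
    intro a w
    have : ((a, w) : ℝ × E) = a • (1, 0) + (0, w) := by simp
    rw [this, map_add, map_smul, h5, h6]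
  rw [h7] at h4
  exact h4.trans (map_zero _)

theorem inverse_lemma {P Q : Type} [NormedAddCommGroup P] [NormedSpace ℝ P] [FiniteDimensional ℝ P]
    [NormedAddCommGroup Q] [NormedSpace ℝ Q] [FiniteDimensional ℝ Q]
    (hfin : Module.finrank ℝ P = Module.finrank ℝ Q) (n : WithTop ℕ∞) (hn : n ≠ 0)
    (f : P → Q) (S : Set P) (hS : IsOpen S) (hf : ∀ q ∈ S, ContDiffAt ℝ n f q)
    (hinj : Set.InjOn f S) (him : ∀ q ∈ S, ∀ h, fderiv ℝ f q h = 0 → h = 0) :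
    IsOpen (f '' S) ∧ ∃ Φ : Q → P, ContDiffOn ℝ n Φ (f '' S) ∧ ∀ q ∈ S, Φ (f q) = q := by
  have : CompleteSpace P := FiniteDimensional.complete ℝ P
  have hloc : ∀ q ∈ S, ∃ ψ : Q → P, ContDiffAt ℝ n ψ (f q) ∧
      ∀ᶠ y in nhds (f q), ψ y ∈ S ∧ f (ψ y) = y := by
    intro q hq
    let e : P ≃L[ℝ] Q := (LinearEquiv.ofInjectiveOfFinrankEq (fderiv ℝ f q : P →ₗ[ℝ] Q)
      (LinearMap.ker_eq_bot.1 (LinearMap.ker_eq_bot'.2 (him q hq))) hfin).toContinuousLinearEquiv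
    have he : HasFDerivAt f (e : P →L[ℝ] Q) q := by
      have h1 := ((hf q hq).differentiableAt hn).hasFDerivAt
      have : (e : P →L[ℝ] Q) = fderiv ℝ f q := by ext x; rfl
      rw [this]; exact h1
    have hst := (hf q hq).hasStrictFDerivAt' he hn
    refine ⟨(hf q hq).localInverse he hn, (hf q hq).to_localInverse he hn, ?_⟩
    have h1 := hst.eventually_right_inverse
    have h2 : Filter.Tendsto ((hf q hq).localInverse he hn) (nhds (f q)) (nhds q) := by
      have := ((hf q hq).to_localInverse he hn).continuousAt
      rwa [ContinuousAt, (hf q hq).localInverse_apply_image he hn] at this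
    filter_upwards [h1, h2.eventually (hS.mem_nhds hq)] with y hy1 hy2
    exact ⟨hy2, hy1⟩
  refine ⟨?_, Function.invFunOn f S, ?_, fun q hq => ?_⟩
  · rw [isOpen_iff_mem_nhds]
    rintro _ ⟨q, hq, rfl⟩
    obtain ⟨ψ, -, h⟩ := hloc q hq
    filter_upwards [h] with y hy
    exact ⟨ψ y, hy.1, hy.2⟩
  · rintro _ ⟨q, hq, rfl⟩
    obtain ⟨ψ, hψ, h⟩ := hloc q hq
    refine ContDiffAt.contDiffWithinAt (hψ.congr_of_eventuallyEq ?_)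
    filter_upwards [h] with y hy
    have hy3 : y ∈ f '' S := ⟨ψ y, hy.1, hy.2⟩
    exact hinj (Function.invFunOn_mem hy3) hy.1 ((Function.invFunOn_eq hy3).trans hy.2.symm)
  · have hy3 : f q ∈ f '' S := ⟨q, hq, rfl⟩
    exact hinj (Function.invFunOn_mem hy3) hq (Function.invFunOn_eq hy3)
end Flow2

section Frame

theorem dot_self_pos' {N : ℕ} {v : Fin N → ℝ} (hv : v ≠ 0) : 0 < v ⬝ᵥ v := by
  have h0 : 0 ≤ v ⬝ᵥ v := Finset.sum_nonneg fun i _ => mul_self_nonneg (v i)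
  exact lt_of_le_of_ne h0 fun h => hv (dotProduct_self_eq_zero.1 h.symm)

theorem dot_contDiffAt {N : ℕ} {X : Type} [NormedAddCommGroup X] [NormedSpace ℝ X]
    {n : WithTop ℕ∞} {a b : X → Fin N → ℝ} {x : X} (ha : ContDiffAt ℝ n a x)
    (hb : ContDiffAt ℝ n b x) : ContDiffAt ℝ n (fun y => a y ⬝ᵥ b y) x := by
  unfold dotProduct
  exact ContDiffAt.sum fun i _ => ((contDiffAt_pi.1 ha) i).mul ((contDiffAt_pi.1 hb) i)

theorem frame_big (N : ℕ) (hN : 3 ≤ N) (n : WithTop ℕ∞) (hn : 1 ≤ n) (v : ℝ → Fin N → ℝ)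
    (hv : ContDiff ℝ n v) :
    ∃ A : ℝ → (Fin (N - 1) → ℝ) →L[ℝ] (Fin N → ℝ), ∀ t, v t ≠ 0 →
      ContDiffAt ℝ n A t ∧ (∀ z, v t ⬝ᵥ A t z = 0) ∧ (∀ z, A t z = 0 → z = 0) := by
  -- a direction avoided by all lines
  obtain ⟨e, he⟩ : ∃ e : Fin N → ℝ, ∀ s t, s • v t ≠ e := by
    have hc : ContDiff ℝ 1 (fun w : ℝ × ℝ => w.1 • v w.2) :=
      contDiff_fst.smul ((hv.of_le hn).comp contDiff_snd)
    have hd := hc.dense_compl_range_of_finrank_lt_finrank (by simp; omega)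
    obtain ⟨e, he⟩ := hd.nonempty
    exact ⟨e, fun s t h => he ⟨(s, t), h⟩⟩
  have he0 : e ≠ 0 := fun h => he 0 0 (by simp [h])
  -- parametrize the orthogonal of e
  obtain ⟨B, hB1, hB2⟩ : ∃ B : (Fin (N - 1) → ℝ) →L[ℝ] (Fin N → ℝ),
      (∀ z, e ⬝ᵥ B z = 0) ∧ ∀ z, B z = 0 → z = 0 := by
    let l : (Fin N → ℝ) →ₗ[ℝ] ℝ := dotProductBilin ℝ ℝ e
    have hl : ∀ x, l x = e ⬝ᵥ x := fun x => rfl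
    have hr : LinearMap.range l = ⊤ := by
      apply LinearMap.range_eq_top.2
      apply LinearMap.surjective
      intro h
      have := hl e
      rw [h] at this
      exact (dot_self_pos' he0).ne this
    have hk := LinearMap.finrank_range_add_finrank_ker l
    rw [hr] at hk
    have hk2 : Module.finrank ℝ (Fin (N - 1) → ℝ) = Module.finrank ℝ (LinearMap.ker l) := by
      simp at hk ⊢; omega
    let eq := LinearEquiv.ofFinrankEq _ _ hk2
    refine ⟨LinearMap.toContinuousLinearMap ((LinearMap.ker l).subtype ∘ₗ eq.toLinearMap), ?_, ?_⟩
    · intro z; exact (eq z).2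
    · intro z hz
      have : ((eq z : LinearMap.ker l) : Fin N → ℝ) = 0 := hz
      have h2 : eq z = 0 := Subtype.ext this
      simpa using h2
  let w : ℝ → Fin N → ℝ := fun t => √(e ⬝ᵥ e) • v t - √(v t ⬝ᵥ v t) • e
  let A : ℝ → (Fin (N - 1) → ℝ) →L[ℝ] (Fin N → ℝ) := fun t =>
    (w t ⬝ᵥ w t) • B - (2 : ℝ) • (∑ i, w t i • ((ContinuousLinearMap.proj i :
      (Fin N → ℝ) →L[ℝ] ℝ).comp B)).smulRight (w t)
  have hA : ∀ t z, A t z = (w t ⬝ᵥ w t) • B z - (2 * (w t ⬝ᵥ B z)) • w t := by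
    intro t z
    simp [A, dotProduct, mul_smul]
  refine ⟨A, fun t ht => ⟨?_, ?_, ?_⟩⟩
  · have hvt : ContDiffAt ℝ n v t := hv.contDiffAt
    have hw : ContDiffAt ℝ n w t :=
      ((contDiffAt_const (c := √(e ⬝ᵥ e))).smul hvt).sub
        (((dot_contDiffAt hvt hvt).sqrt (dot_self_pos' ht).ne').smul (contDiffAt_const (c := e)))
    refine ((dot_contDiffAt hw hw).smul (contDiffAt_const (c := B))).sub
      (ContDiffAt.smul (contDiffAt_const (c := (2 : ℝ))) ?_)
    exact (ContDiffAt.sum fun i _ => ((contDiffAt_pi.1 hw) i).smul contDiffAt_const).smulRight hw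
  · intro z
    have hee := Real.mul_self_sqrt (dot_self_pos' he0).le
    have hvv := Real.mul_self_sqrt (dot_self_pos' ht).le
    have hz := hB1 z
    rw [hA]
    simp only [dotProduct_sub, dotProduct_smul, smul_eq_mul, w, sub_dotProduct, smul_dotProduct, hz]
    rw [dotProduct_comm e (v t)]
    generalize √(e ⬝ᵥ e) = a at *
    generalize √(v t ⬝ᵥ v t) = b at *
    rw [← hee, ← hvv]
    ring
  · intro z hz
    rw [hA] at hz
    have hw0 : w t ≠ 0 := by
      intro h
      have h1 : √(e ⬝ᵥ e) • v t = √(v t ⬝ᵥ v t) • e := sub_eq_zero.1 h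
      have h2 : √(v t ⬝ᵥ v t) ≠ 0 := (Real.sqrt_pos.2 (dot_self_pos' ht)).ne'
      refine he ((√(v t ⬝ᵥ v t))⁻¹ * √(e ⬝ᵥ e)) t ?_
      rw [mul_smul, h1, smul_smul, inv_mul_cancel₀ h2, one_smul]
    have hww := dot_self_pos' hw0
    have h1 : w t ⬝ᵥ ((w t ⬝ᵥ w t) • B z - (2 * (w t ⬝ᵥ B z)) • w t) = 0 := by
      rw [hz, dotProduct_zero]
    simp only [dotProduct_sub, dotProduct_smul, smul_eq_mul] at h1
    have h2 : w t ⬝ᵥ B z = 0 := by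
      have : (w t ⬝ᵥ B z) * (w t ⬝ᵥ w t) = 0 := by linarith
      exact (mul_eq_zero.1 this).resolve_right hww.ne'
    rw [h2] at hz
    simp at hz
    exact hB2 z (hz.resolve_left hw0)

theorem frame (N : ℕ) (hN : 1 ≤ N) (n : WithTop ℕ∞) (hn : 1 ≤ n) (v : ℝ → Fin N → ℝ)
    (hv : ContDiff ℝ n v) :
    ∃ A : ℝ → (Fin (N - 1) → ℝ) →L[ℝ] (Fin N → ℝ), ∀ t, v t ≠ 0 →
      ContDiffAt ℝ n A t ∧ (∀ z, v t ⬝ᵥ A t z = 0) ∧ (∀ z, A t z = 0 → z = 0) := by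
  rcases Nat.lt_or_ge N 3 with h3 | h3
  · interval_cases N
    · exact ⟨fun _ => 0, fun t _ => ⟨contDiffAt_const, by simp, fun z _ => by
        ext i; exact i.elim0⟩⟩
    · refine ⟨fun t => (ContinuousLinearMap.proj (0 : Fin 1) : (Fin 1 → ℝ) →L[ℝ] ℝ).smulRight
        (![-(v t 1), v t 0] : Fin 2 → ℝ), fun t ht => ⟨?_, ?_, ?_⟩⟩
      · have h := contDiff_pi.1 hv
        refine (contDiffAt_const (c := (ContinuousLinearMap.proj (0 : Fin 1) :
          (Fin 1 → ℝ) →L[ℝ] ℝ))).smulRight (contDiffAt_pi.2 ?_)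
        intro i
        fin_cases i
        · exact (h 1).contDiffAt.neg
        · exact (h 0).contDiffAt
      · intro z
        simp [dotProduct, Fin.sum_univ_two]
        ring
      · intro z hz
        have h0 := congrFun hz 0
        have h1 := congrFun hz 1
        simp at h0 h1
        have hz0 : z 0 = 0 := by
          by_contra hne
          apply ht
          ext i
          fin_cases i
          · simpa using h1.resolve_left hne
          · simpa using h0.resolve_left hne
        ext i
        fin_cases i
        exact hz0
  · exact frame_big N h3 n hn v hv

theorem norm_sq_le_dot {N : ℕ} (v : Fin N → ℝ) : ‖v‖ ^ 2 ≤ v ⬝ᵥ v := by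
  have h0 : 0 ≤ v ⬝ᵥ v := Finset.sum_nonneg fun i _ => mul_self_nonneg (v i)
  have : ‖v‖ ≤ √(v ⬝ᵥ v) := by
    refine (pi_norm_le_iff_of_nonneg (Real.sqrt_nonneg _)).2 fun i => ?_
    rw [Real.norm_eq_abs]
    refine Real.abs_le_sqrt ?_
    rw [sq]
    exact Finset.single_le_sum (f := fun i => v i * v i) (fun i _ => mul_self_nonneg (v i))
      (Finset.mem_univ i)
  calc ‖v‖ ^ 2 ≤ √(v ⬝ᵥ v) ^ 2 := by gcongr
    _ = _ := Real.sq_sqrt h0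

theorem abs_dot_le {N : ℕ} (v w : Fin N → ℝ) : |v ⬝ᵥ w| ≤ N * (‖v‖ * ‖w‖) := by
  calc |v ⬝ᵥ w| ≤ ∑ i, |v i * w i| := Finset.abs_sum_le_sum_abs _ _
    _ ≤ ∑ i : Fin N, ‖v‖ * ‖w‖ := by
        refine Finset.sum_le_sum fun i _ => ?_
        rw [abs_mul]
        exact mul_le_mul (norm_le_pi_norm v i) (norm_le_pi_norm w i) (abs_nonneg _) (norm_nonneg _)
    _ = _ := by simp

theorem dot_pos_of_close {N : ℕ} (v x : Fin N → ℝ) (hv : v ≠ 0) (η : ℝ) (hη : N * η < 1)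
    (hx : ‖x - v‖ ≤ η * ‖v‖) : 0 < v ⬝ᵥ x := by
  have h1 : v ⬝ᵥ x = v ⬝ᵥ v + v ⬝ᵥ (x - v) := by rw [← dotProduct_add]; simp
  have h2 := abs_dot_le v (x - v)
  have h3 := norm_sq_le_dot v
  have h4 := neg_abs_le (v ⬝ᵥ (x - v))
  have hpos : 0 < ‖v‖ := norm_pos_iff.2 hv
  have h5 : (N : ℝ) * (‖v‖ * ‖x - v‖) ≤ N * (‖v‖ * (η * ‖v‖)) := by gcongr
  have h6 : 0 < (1 - N * η) * ‖v‖ ^ 2 := by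
    have : 0 < 1 - N * η := by linarith
    positivity
  nlinarith

theorem frame_scaled (N : ℕ) (hN : 1 ≤ N) (n : WithTop ℕ∞) (hn : 1 ≤ n) (v : ℝ → Fin N → ℝ)
    (hv : ContDiff ℝ n v) (c : ℝ) (hc : 0 < c) :
    ∃ A : ℝ → (Fin (N - 1) → ℝ) →L[ℝ] (Fin N → ℝ), ∀ t, v t ≠ 0 →
      ContDiffAt ℝ n A t ∧ (∀ z, v t ⬝ᵥ A t z = 0) ∧ (∀ z, A t z = 0 → z = 0) ∧
      ‖A t‖ ≤ c ∧ ‖A t‖ ≤ c * ‖v t‖ := by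
  obtain ⟨A, hA⟩ := frame N hN n hn v hv
  let V := (Fin (N - 1) → ℝ) →L[ℝ] (Fin N → ℝ)
  let te : V ≃L[ℝ] EuclideanSpace ℝ (Fin (Module.finrank ℝ V)) := toEuclidean
  obtain ⟨C, hC, hCb⟩ := (te.symm : EuclideanSpace ℝ (Fin (Module.finrank ℝ V)) →L[ℝ] V).bound
  have hb : ∀ a : V, ‖a‖ ≤ C * (1 + ‖te a‖ ^ 2) := by
    intro a
    have h1 := hCb (te a)
    simp only [ContinuousLinearEquiv.coe_coe, ContinuousLinearEquiv.symm_apply_apply] at h1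
    refine h1.trans ?_
    gcongr
    nlinarith [sq_nonneg (‖te a‖ - 1), sq_nonneg (‖te a‖)]
  let y : ℝ → ℝ := fun t => v t ⬝ᵥ v t
  let D : ℝ → ℝ := fun t => C * (1 + ‖te (A t)‖ ^ 2)
  have hD : ∀ t, 0 < D t := fun t => by positivity
  have hN0 : (0 : ℝ) < N := by exact_mod_cast hN
  let r : ℝ → ℝ := fun t => c / N * (y t / (1 + y t)) / D t
  have hN1 : (1 : ℝ) ≤ N := by exact_mod_cast hN
  refine ⟨fun t => r t • A t, fun t ht => ?_⟩
  obtain ⟨hA1, hA2, hA3⟩ := hA t ht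
  have hy : 0 < y t := dot_self_pos' ht
  have hr : 0 < r t := by
    have := hD t
    positivity
  have hvt : ContDiffAt ℝ n v t := hv.contDiffAt
  have hyc : ContDiffAt ℝ n y t := dot_contDiffAt hvt hvt
  have hrA : ‖r t • A t‖ ≤ c / N * (y t / (1 + y t)) := by
    rw [norm_smul, Real.norm_eq_abs, abs_of_pos hr]
    calc r t * ‖A t‖ ≤ r t * D t := by gcongr; exact hb _
      _ = _ := div_mul_cancel₀ _ (hD t).ne'
  refine ⟨?_, ?_, ?_, ?_, ?_⟩
  · have hDc : ContDiffAt ℝ n D t :=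
      contDiffAt_const.mul (contDiffAt_const.add
        (ContDiffAt.norm_sq ℝ (te.contDiff.contDiffAt.comp t hA1)))
    exact ((contDiffAt_const.mul (hyc.div (contDiffAt_const.add hyc) (by positivity))).div hDc
      (hD t).ne').smul hA1
  · intro z
    simp [hA2 z]
  · intro z hz
    have : r t • A t z = 0 := hz
    exact hA3 z ((smul_eq_zero.1 this).resolve_left hr.ne')
  · refine hrA.trans ?_
    have h1 : c / N ≤ c := div_le_self hc.le hN1
    have h2 : y t / (1 + y t) ≤ 1 := by rw [div_le_one (by positivity)]; linarith
    calc _ ≤ c * 1 := by gcongr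
      _ = c := mul_one c
  · refine hrA.trans ?_
    have h1 : y t ≤ N * ‖v t‖ ^ 2 := by
      have := (le_abs_self _).trans (abs_dot_le (v t) (v t))
      simpa [sq] using this
    have h3 := norm_sq_le_dot (v t)
    have h2 : y t / (1 + y t) ≤ N * ‖v t‖ := by
      rw [div_le_iff₀ (by positivity)]
      have h0 := norm_nonneg (v t)
      have h4 : ‖v t‖ ≤ 1 + y t := by
        change ‖v t‖ ^ 2 ≤ y t at h3
        nlinarith [sq_nonneg (‖v t‖ - 1)]
      calc y t ≤ N * ‖v t‖ * ‖v t‖ := by nlinarith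
        _ ≤ _ := by gcongr
    calc _ ≤ c / N * (N * ‖v t‖) := by gcongr
      _ = _ := by field_simp
end Frame

section Final

theorem cutoff_field (N k : ℕ) (hk : 1 ≤ k) (t₀ t₁ : ℝ) (x₀ : Fin N → ℝ) (ρ : ℝ) (hρ : 0 < ρ)
    (g : ℝ × (Fin N → ℝ) → (Fin N → ℝ)) (hg : ContDiff ℝ k g) :
    ∃ F : C(ℝ × (Fin N → ℝ), ℝ × (Fin N → ℝ)), ContDiff ℝ k F ∧
      (∃ K : NNReal, 0 < K ∧ LipschitzWith K F) ∧ (∃ M : ℝ, 0 ≤ M ∧ ∀ p, ‖F p‖ ≤ M) ∧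
      (∀ p, (F p).1 = 0) ∧
      ∀ t ∈ Set.Ioo t₀ t₁, ∀ x ∈ Metric.closedBall x₀ ρ, F (t, x) = (0, g (t, x)) := by
  let R : ℝ := max ρ (|t₁ - t₀|)
  have hR : 0 < R := lt_max_of_lt_left hρ
  let b : ContDiffBump ((t₀, x₀) : ℝ × (Fin N → ℝ)) := ⟨R, R + 1, hR, by linarith⟩
  let f : ℝ × (Fin N → ℝ) → ℝ × (Fin N → ℝ) := fun p => (0, b p • g p)
  have hf : ContDiff ℝ k f := contDiff_const.prodMk (b.contDiff.smul hg)
  have hsupp : HasCompactSupport f := by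
    refine b.hasCompactSupport.mono ?_
    intro p hp hb
    apply hp
    have hb' : b p = 0 := hb
    simp [f, hb']
  have hk1 : ((k : ℕ) : WithTop ℕ∞) ≠ 0 := by
    exact_mod_cast (by omega : k ≠ 0)
  obtain ⟨K, hK⟩ := hf.lipschitzWith_of_hasCompactSupport hsupp hk1
  obtain ⟨M, hM⟩ := hsupp.exists_bound_of_continuous hf.continuous
  refine ⟨⟨f, hf.continuous⟩, hf, ⟨K + 1, by positivity, hK.weaken (by simp)⟩,
    ⟨M, (norm_nonneg _).trans (hM (t₀, x₀)), hM⟩, fun p => rfl, ?_⟩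
  intro t ht x hx
  have : b (t, x) = 1 := by
    refine b.one_of_mem_closedBall ?_
    rw [Metric.mem_closedBall, Prod.dist_eq]
    refine max_le ?_ ?_
    · refine le_trans ?_ (le_max_right _ _)
      simp only [Real.dist_eq]
      rw [abs_of_pos (by linarith [ht.1]), abs_of_pos (by linarith [ht.1, ht.2])]
      linarith [ht.2]
    · exact (Metric.mem_closedBall.1 hx).trans (le_max_left _ _)
  simp [f, this]

end Final

theorem stmt_15 (N k : ℕ) (hN : 1 ≤ N) (hk : 1 ≤ k)
    (t₀ t₁ : ℝ) (ht : t₀ < t₁)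
    (ω₀ : Set (Fin N → ℝ)) (hω₀ : IsOpen ω₀) (hω₀ne : ω₀.Nonempty)
    (g : ℝ × (Fin N → ℝ) → (Fin N → ℝ)) (hg : ContDiff ℝ (k : ℕ∞) g)
    (hgne : ∀ p ∈ (Set.Ioo t₀ t₁) ×ˢ ω₀, g p ≠ 0) :
    ∃ (U : Set (Fin (N - 1) → ℝ)) (ε : ℝ)
      (Λ : ℝ × ℝ × (Fin (N - 1) → ℝ) → ℝ × (Fin N → ℝ))
      (W : Set (ℝ × (Fin N → ℝ))),
      IsOpen U ∧ U.Nonempty ∧ 0 < ε ∧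
      IsOpen W ∧ W ⊆ (Set.Ioo t₀ t₁) ×ˢ ω₀ ∧
      -- (i) Λ is a C^k diffeomorphism from (t₀,t₁)×(0,ε)×U onto W
      ContDiffOn ℝ (k : ℕ∞) Λ ((Set.Ioo t₀ t₁) ×ˢ ((Set.Ioo (0:ℝ) ε) ×ˢ U)) ∧
      Set.InjOn Λ ((Set.Ioo t₀ t₁) ×ˢ ((Set.Ioo (0:ℝ) ε) ×ˢ U)) ∧
      Λ '' ((Set.Ioo t₀ t₁) ×ˢ ((Set.Ioo (0:ℝ) ε) ×ˢ U)) = W ∧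
      (∃ Φ : ℝ × (Fin N → ℝ) → ℝ × ℝ × (Fin (N - 1) → ℝ),
        ContDiffOn ℝ (k : ℕ∞) Φ W ∧
        ∀ q ∈ (Set.Ioo t₀ t₁) ×ˢ ((Set.Ioo (0:ℝ) ε) ×ˢ U), Φ (Λ q) = q) ∧
      -- (ii) the time component of Λ(t,s,z) is t
      (∀ q ∈ (Set.Ioo t₀ t₁) ×ˢ ((Set.Ioo (0:ℝ) ε) ×ˢ U), (Λ q).1 = q.1) ∧
      -- (iii) ∂ₛ(y ∘ Λ) = g(Λ)·∇ₓy(Λ)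
      (∀ y : ℝ × (Fin N → ℝ) → ℝ, ContDiff ℝ 1 y →
        ∀ q ∈ (Set.Ioo t₀ t₁) ×ˢ ((Set.Ioo (0:ℝ) ε) ×ˢ U),
          deriv (fun s => y (Λ (q.1, s, q.2.2))) q.2.1
            = fderiv ℝ y (Λ q) (0, g (Λ q))) := by
  have hk0 : k ≠ 0 := by omega
  have hg' : ContDiff ℝ k g := hg
  have hk1 : (1 : WithTop ℕ∞) ≤ (k : WithTop ℕ∞) := by exact_mod_cast hk
  obtain ⟨x₀, hx₀⟩ := hω₀ne
  obtain ⟨ρ, hρ, hρω⟩ := Metric.nhds_basis_closedBall.mem_iff.1 (hω₀.mem_nhds hx₀)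
  obtain ⟨F, hFc, ⟨K, hK, hL⟩, ⟨M, hM0, hM⟩, hF1, hFg⟩ :=
    cutoff_field N k hk t₀ t₁ x₀ ρ hρ g hg'
  have hKr : (0 : ℝ) < K := hK
  have hN1 : (1 : ℝ) ≤ N := by exact_mod_cast hN
  have hN0 : (0 : ℝ) < N := by linarith
  obtain ⟨η, hη⟩ : ∃ η : ℝ, η = 1 / (4 * N) := ⟨_, rfl⟩
  have hη0 : 0 < η := by rw [hη]; positivity
  have hNη : N * η = 1 / 4 := by rw [hη]; field_simp
  have hη4 : η ≤ 1 / 4 := by nlinarith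
  obtain ⟨c, hc0, hcρ, hKc⟩ : ∃ c : ℝ, 0 < c ∧ c ≤ ρ / 2 ∧ K * c ≤ η :=
    ⟨min (ρ / 2) (η / K), lt_min (by positivity) (by positivity), min_le_left _ _, by
      rw [mul_comm, ← le_div_iff₀ hKr]; exact min_le_right _ _⟩
  obtain ⟨T, hT, hTK, hTM⟩ : ∃ T : ℝ, 0 < T ∧ T * K ≤ η / 2 ∧ T * (M + 1) ≤ ρ / 4 :=
    ⟨min (η / 2 / K) (ρ / 4 / (M + 1)), lt_min (by positivity) (by positivity), by
      rw [← le_div_iff₀ hKr]; exact min_le_left _ _, by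
      rw [← le_div_iff₀ (by positivity)]; exact min_le_right _ _⟩
  obtain ⟨φ, hφc, hφ0, hφd, hφb⟩ := flow_exists k hk0 F hFc K hL T hT (by linarith)
  have hφb' : ∀ p s, |s| < T → ‖φ (s, p) - p‖ ≤ 2 * T * ‖F p‖ := by
    intro p s hs
    have h1 := hφb p s hs
    have h2 := norm_nonneg (φ (s, p) - p)
    nlinarith
  have hvc : ContDiff ℝ k (fun t : ℝ => g (t, x₀)) :=
    hg'.comp (contDiff_id.prodMk contDiff_const)
  obtain ⟨A, hA⟩ := frame_scaled N hN k hk1 (fun t => g (t, x₀)) hvc c hc0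
  have hv0 : ∀ t ∈ Set.Ioo t₀ t₁, g (t, x₀) ≠ 0 := fun t ht' => hgne _ ⟨ht', hx₀⟩
  -- the first component is constant along the flow
  have hfst : ∀ p s, |s| < T → (φ (s, p)).1 = p.1 := by
    intro p s hs
    have hder : ∀ r ∈ Set.Ioo (-T) T, HasDerivAt (fun r => (φ (r, p)).1) 0 r := by
      intro r hr
      have := (ContinuousLinearMap.fst ℝ ℝ (Fin N → ℝ)).hasFDerivAt.comp_hasDerivAt r
        (hφd p r (abs_lt.2 hr))
      simpa [hF1, Function.comp_def] using this
    have := isOpen_Ioo.is_const_of_deriv_eq_zero (isPreconnected_Ioo (a := -T) (b := T))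
      (f := fun r => (φ (r, p)).1)
      (fun r hr => (hder r hr).differentiableAt.differentiableWithinAt)
      (fun r hr => (hder r hr).deriv) (abs_lt.1 hs) (show (0 : ℝ) ∈ Set.Ioo (-T) T from
        ⟨by linarith, hT⟩)
    simpa [hφ0] using this
  let σ : ℝ × (Fin (N - 1) → ℝ) → ℝ × (Fin N → ℝ) := fun w => (w.1, x₀ + A w.1 w.2)
  -- core claim
  have core : ∀ t ∈ Set.Ioo t₀ t₁, ∀ z : Fin (N - 1) → ℝ, ‖z‖ < 1 → ∀ s, |s| < T →
      (φ (s, σ (t, z))).1 = t ∧ (φ (s, σ (t, z))).2 ∈ Metric.closedBall x₀ ρ ∧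
      F (φ (s, σ (t, z))) = (0, g (φ (s, σ (t, z)))) ∧
      0 < g (t, x₀) ⬝ᵥ g (φ (s, σ (t, z))) := by
    intro t ht' z hz s hs
    obtain ⟨-, -, -, hAc, hAv⟩ := hA t (hv0 t ht')
    have h1 : (φ (s, σ (t, z))).1 = t := hfst _ s hs
    have hAz : ‖A t z‖ ≤ ‖A t‖ := by
      calc ‖A t z‖ ≤ ‖A t‖ * ‖z‖ := (A t).le_opNorm z
        _ ≤ ‖A t‖ * 1 := by gcongr
        _ = _ := mul_one _
    have hp : ‖σ (t, z) - (t, x₀)‖ = ‖A t z‖ := by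
      simp [σ, Prod.norm_def]
    have hφp := hφb' (σ (t, z)) s hs
    have h2 : (φ (s, σ (t, z))).2 ∈ Metric.closedBall x₀ ρ := by
      rw [mem_closedBall_iff_norm]
      have e1 : ‖(φ (s, σ (t, z))).2 - x₀‖ ≤ ‖φ (s, σ (t, z)) - (t, x₀)‖ :=
        norm_snd_le (φ (s, σ (t, z)) - (t, x₀))
      have e2 := norm_sub_le_norm_sub_add_norm_sub (φ (s, σ (t, z))) (σ (t, z)) (t, x₀)
      have e3 : T * ‖F (σ (t, z))‖ ≤ T * (M + 1) := by
        gcongr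
        linarith [hM (σ (t, z))]
      linarith
    have h3 : F (φ (s, σ (t, z))) = (0, g (φ (s, σ (t, z)))) := by
      have := hFg t ht' _ h2
      have e : ((t, (φ (s, σ (t, z))).2) : ℝ × (Fin N → ℝ)) = φ (s, σ (t, z)) :=
        Prod.ext h1.symm rfl
      rwa [e] at this
    refine ⟨h1, h2, h3, ?_⟩
    have hFv : F (t, x₀) = (0, g (t, x₀)) :=
      hFg t ht' x₀ (Metric.mem_closedBall_self hρ.le)
    have hvpos : 0 < ‖g (t, x₀)‖ := norm_pos_iff.2 (hv0 t ht')
    have hFvn : ‖F (t, x₀)‖ = ‖g (t, x₀)‖ := by rw [hFv]; simp [Prod.norm_def]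
    have d1 : ‖F (σ (t, z)) - F (t, x₀)‖ ≤ η * ‖g (t, x₀)‖ := by
      calc ‖F (σ (t, z)) - F (t, x₀)‖ ≤ K * ‖σ (t, z) - (t, x₀)‖ := hL.norm_sub_le _ _
        _ ≤ K * (c * ‖g (t, x₀)‖) := by
          rw [hp]; gcongr; exact hAz.trans hAv
        _ = (K * c) * ‖g (t, x₀)‖ := by ring
        _ ≤ _ := by gcongr
    have d2 : ‖F (σ (t, z))‖ ≤ 2 * ‖g (t, x₀)‖ := by
      have := norm_sub_norm_le (F (σ (t, z))) (F (t, x₀))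
      nlinarith
    have d3 : ‖F (φ (s, σ (t, z))) - F (σ (t, z))‖ ≤ 2 * η * ‖g (t, x₀)‖ := by
      calc ‖F (φ (s, σ (t, z))) - F (σ (t, z))‖ ≤ K * ‖φ (s, σ (t, z)) - σ (t, z)‖ :=
            hL.norm_sub_le _ _
        _ ≤ K * (2 * T * (2 * ‖g (t, x₀)‖)) := by
          gcongr
          exact hφp.trans (by gcongr)
        _ = 4 * (T * K) * ‖g (t, x₀)‖ := by ring
        _ ≤ 4 * (η / 2) * ‖g (t, x₀)‖ := by gcongr
        _ = _ := by ring
    refine dot_pos_of_close _ _ (hv0 t ht') (3 * η) (by linarith) ?_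
    have d4 : ‖g (φ (s, σ (t, z))) - g (t, x₀)‖ = ‖F (φ (s, σ (t, z))) - F (t, x₀)‖ := by
      rw [h3, hFv]; simp [Prod.norm_def]
    rw [d4]
    have := norm_sub_le_norm_sub_add_norm_sub (F (φ (s, σ (t, z)))) (F (σ (t, z))) (F (t, x₀))
    linarith
  let U : Set (Fin (N - 1) → ℝ) := Metric.ball 0 1
  let Λ : ℝ × ℝ × (Fin (N - 1) → ℝ) → ℝ × (Fin N → ℝ) := fun w => φ (w.2.1, σ (w.1, w.2.2))
  let S : Set (ℝ × ℝ × (Fin (N - 1) → ℝ)) := Set.Ioo t₀ t₁ ×ˢ (Set.Ioo (0:ℝ) (T / 2) ×ˢ U)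
  have hS : IsOpen S := isOpen_Ioo.prod (isOpen_Ioo.prod Metric.isOpen_ball)
  have hSm : ∀ q ∈ S, q.1 ∈ Set.Ioo t₀ t₁ ∧ |q.2.1| < T / 2 ∧ ‖q.2.2‖ < 1 := by
    rintro q ⟨h1, h2, h3⟩
    refine ⟨h1, ?_, by simpa [U] using h3⟩
    rw [abs_of_pos h2.1]; exact h2.2
  have hσc : ∀ t ∈ Set.Ioo t₀ t₁, ∀ z, ContDiffAt ℝ k σ (t, z) := by
    intro t ht' z
    have hAt : ContDiffAt ℝ k A t := (hA t (hv0 t ht')).1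
    refine contDiffAt_fst.prodMk (contDiffAt_const.add ?_)
    exact ContDiffAt.clm_apply
      (ContDiffAt.comp (t, z) (g := A) (f := Prod.fst) hAt contDiffAt_fst) contDiffAt_snd
  have hΛc : ∀ q ∈ S, ContDiffAt ℝ k Λ q := by
    intro q hq
    obtain ⟨h1, h2, h3⟩ := hSm q hq
    have e1 : ContDiffAt ℝ k (fun w : ℝ × ℝ × (Fin (N - 1) → ℝ) => σ (w.1, w.2.2)) q :=
      ContDiffAt.comp q (g := σ) (f := fun w : ℝ × ℝ × (Fin (N - 1) → ℝ) => (w.1, w.2.2))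
        (hσc q.1 h1 q.2.2)
        (contDiffAt_fst.prodMk (contDiff_snd.comp contDiff_snd).contDiffAt)
    exact ContDiffAt.comp q (g := φ)
      (f := fun w : ℝ × ℝ × (Fin (N - 1) → ℝ) => (w.2.1, σ (w.1, w.2.2)))
      (hφc _ (by show |q.2.1| < T; linarith))
      ((contDiff_fst.comp contDiff_snd).contDiffAt.prodMk e1)
  have hinj : Set.InjOn Λ S := by
    rintro ⟨t, s, z⟩ hq ⟨t', s', z'⟩ hq' heq
    obtain ⟨h1, h2, h3⟩ := hSm _ hq
    obtain ⟨h1', h2', h3'⟩ := hSm _ hq'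
    have heq' : φ (s, σ (t, z)) = φ (s', σ (t', z')) := heq
    simp only at h1 h2 h3 h1' h2' h3'
    have htt : t = t' := by
      have a1 := (core t h1 z h3 s (by linarith)).1
      have a2 := (core t' h1' z' h3' s' (by linarith)).1
      rw [← a1, ← a2, heq']
    subst htt
    have hflow : φ (s - s', σ (t, z)) = σ (t, z') := by
      have a1 := flow_group F K hL T φ hφ0 hφd (σ (t, z)) (-s') s (by rw [abs_neg]; linarith)
      have a2 := flow_group F K hL T φ hφ0 hφd (σ (t, z')) (-s') s' (by rw [abs_neg]; linarith)
      rw [heq', a2] at a1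
      rw [neg_add_cancel, hφ0] at a1
      rw [a1]
      congr 2
      ring
    have hsT : |s - s'| < T := by
      have := abs_sub s s'
      linarith
    obtain ⟨-, hA0, hAi, -, -⟩ := hA t (hv0 t h1)
    have hder : ∀ r, |r| < T → HasDerivAt (fun r => g (t, x₀) ⬝ᵥ (φ (r, σ (t, z))).2)
        (g (t, x₀) ⬝ᵥ g (φ (r, σ (t, z)))) r := by
      intro r hr
      have e := hφd (σ (t, z)) r hr
      rw [(core t h1 z h3 r hr).2.2.1] at e
      have e2 := (ContinuousLinearMap.snd ℝ ℝ (Fin N → ℝ)).hasFDerivAt.comp_hasDerivAt r e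
      have e3 := hasDerivAt_pi.1 e2
      unfold dotProduct
      exact HasDerivAt.fun_sum fun i _ => (e3 i).const_mul (g (t, x₀) i)
    have hend : g (t, x₀) ⬝ᵥ (φ (s - s', σ (t, z))).2 = g (t, x₀) ⬝ᵥ (φ (0, σ (t, z))).2 := by
      rw [hflow, hφ0]
      have b1 := hA0 z
      have b2 := hA0 z'
      simp only [σ, dotProduct_add, b1, b2]
    have hss : s - s' = 0 := by
      have hmono : StrictMonoOn (fun r => g (t, x₀) ⬝ᵥ (φ (r, σ (t, z))).2) (Set.Ioo (-T) T) := by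
        refine strictMonoOn_of_deriv_pos (convex_Ioo _ _) ?_ ?_
        · intro r hr
          exact (hder r (abs_lt.2 hr)).continuousAt.continuousWithinAt
        · intro r hr
          rw [interior_Ioo] at hr
          rw [(hder r (abs_lt.2 hr)).deriv]
          exact (core t h1 z h3 r (abs_lt.2 hr)).2.2.2
      exact hmono.injOn (abs_lt.1 hsT) ⟨by linarith, hT⟩ hend
    have hss' : s = s' := by linarith
    subst hss'
    rw [sub_self, hφ0] at hflow
    have hz : A t z = A t z' := by
      have := congrArg Prod.snd hflow
      simpa [σ] using this
    have hz' : z = z' := by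
      have := hAi (z - z') (by rw [map_sub, hz, sub_self])
      exact sub_eq_zero.1 this
    rw [hz']
  have him : ∀ q ∈ S, ∀ h, fderiv ℝ Λ q h = 0 → h = 0 := by
    intro q hq h hh
    obtain ⟨h1, h2, h3⟩ := hSm q hq
    have hk0' : (k : WithTop ℕ∞) ≠ 0 := by exact_mod_cast hk0
    obtain ⟨hAc, hA0, hAi, -, -⟩ := hA q.1 (hv0 q.1 h1)
    have hAd : HasFDerivAt A (fderiv ℝ A q.1) q.1 := (hAc.differentiableAt hk0').hasFDerivAt
    have hA2 : HasFDerivAt (fun w : ℝ × (Fin (N - 1) → ℝ) => A w.1)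
        ((fderiv ℝ A q.1).comp (ContinuousLinearMap.fst ℝ ℝ (Fin (N - 1) → ℝ))) (q.1, q.2.2) :=
      HasFDerivAt.comp (q.1, q.2.2) (g := A) (f := Prod.fst) hAd hasFDerivAt_fst
    have hσd := (hasFDerivAt_fst (𝕜 := ℝ) (p := ((q.1, q.2.2) : ℝ × (Fin (N - 1) → ℝ)))).prodMk
      ((hA2.clm_apply hasFDerivAt_snd).const_add x₀)
    have key := flow_immersion F K hL T hT φ
      (fun q hq => (hφc q hq).differentiableAt hk0') hφ0 hφd σ _ q h2 hσd _
      ((hΛc q hq).differentiableAt hk0').hasFDerivAt h hh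
    have hcore := core q.1 h1 q.2.2 h3 0 (by simpa using hT)
    rw [hφ0] at hcore
    obtain ⟨-, -, hFσ, hpos⟩ := hcore
    rw [hFσ] at key
    have k1 : h.1 = 0 := by
      have := congrArg Prod.fst key
      simpa using this
    have k2 : h.2.1 • g (σ (q.1, q.2.2)) + A q.1 h.2.2 = 0 := by
      have := congrArg Prod.snd key
      simpa [k1] using this
    have k3 : h.2.1 = 0 := by
      have := congrArg (fun x => g (q.1, x₀) ⬝ᵥ x) k2
      have b1 := hA0 h.2.2
      simp only [dotProduct_add, dotProduct_smul, b1, dotProduct_zero, add_zero, smul_eq_mul] at this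
      exact (mul_eq_zero.1 this).resolve_right hpos.ne'
    have k4 : h.2.2 = 0 := hAi _ (by simpa [k3] using k2)
    exact Prod.ext k1 (Prod.ext k3 k4)
  obtain ⟨hWo, Φ, hΦc, hΦ⟩ := inverse_lemma (by simp; omega) k (by exact_mod_cast hk0) Λ S hS hΛc hinj him
  refine ⟨U, T / 2, Λ, Λ '' S, Metric.isOpen_ball, ⟨0, by simp [U]⟩, by positivity, hWo, ?_,
    fun q hq => (hΛc q hq).contDiffWithinAt, hinj, rfl, ⟨Φ, hΦc, hΦ⟩, ?_, ?_⟩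
  · rintro _ ⟨q, hq, rfl⟩
    obtain ⟨h1, h2, h3⟩ := hSm q hq
    obtain ⟨c1, c2, -, -⟩ := core q.1 h1 q.2.2 h3 q.2.1 (by linarith)
    exact ⟨by show (φ (q.2.1, σ (q.1, q.2.2))).1 ∈ _; rw [c1]; exact h1, hρω c2⟩
  · intro q hq
    obtain ⟨h1, h2, h3⟩ := hSm q hq
    exact (core q.1 h1 q.2.2 h3 q.2.1 (by linarith)).1
  · intro y hy q hq
    obtain ⟨h1, h2, h3⟩ := hSm q hq
    have hd := hφd (σ (q.1, q.2.2)) q.2.1 (by linarith)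
    rw [(core q.1 h1 q.2.2 h3 q.2.1 (by linarith)).2.2.1] at hd
    have hyd : HasFDerivAt y (fderiv ℝ y (Λ q)) (Λ q) :=
      (hy.differentiable one_ne_zero (Λ q)).hasFDerivAt
    exact (HasFDerivAt.comp_hasDerivAt q.2.1 hyd hd).deriv
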